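/- arXiv:2209.08519 — 2 statements merged into one kernel-verified Lean document; each statement's English description precedes it below -/
import Mathlib

section
/- The endomorphism ring of a centrally endo-AIP module is a semiprime ring. That is, if M is a centrally endo-AIP right R-module, then S = End_R(M) is semiprime. -/
/-- A submodule `N` of `M` is *fully invariant* if it is stable under every
endomorphism of `M`. -/
def IsFullyInvariant {R M : Type*} [Ring R] [AddCommGroup M] [Module R M]
    (N : Submodule R M) : Prop :=
  ∀ φ : Module.End R M, ∀ n ∈ N, φ n ∈ N

/-- `M` is a *centrally endo-AIP* module: for every fully invariant submodule `N`
of `M`, the left annihilator of `N` in `S = End_R(M)` is a centrally s-unital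
ideal of `S`, i.e. every `φ` annihilating `N` satisfies `φ * ψ = φ` for some
central element `ψ` of `S` annihilating `N`. -/
def IsCentrallyEndoAIP (R M : Type*) [Ring R] [AddCommGroup M] [Module R M] : Prop :=
  ∀ N : Submodule R M, IsFullyInvariant N →
    ∀ φ : Module.End R M, (∀ n ∈ N, φ n = 0) →
      ∃ ψ : Module.End R M, (∀ n ∈ N, ψ n = 0) ∧
        (∀ g : Module.End R M, ψ * g = g * ψ) ∧ φ * ψ = φ

/-- `M` is an *endo-AIP* module: for every fully invariant submodule `N` of `M`,
the left annihilator of `N` in `S = End_R(M)` is a right s-unital ideal of `S`. -/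
def IsEndoAIP (R M : Type*) [Ring R] [AddCommGroup M] [Module R M] : Prop :=
  ∀ N : Submodule R M, IsFullyInvariant N →
    ∀ φ : Module.End R M, (∀ n ∈ N, φ n = 0) →
      ∃ ψ : Module.End R M, (∀ n ∈ N, ψ n = 0) ∧ φ * ψ = φ

/-- A ring `S` is a *(left) centrally AIP* ring: the left annihilator of every
two-sided ideal of `S` is a centrally s-unital ideal of `S`. -/
def IsCentrallyAIPRing (S : Type*) [Ring S] : Prop :=
  ∀ I : TwoSidedIdeal S, ∀ a : S, (∀ x ∈ I, a * x = 0) →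
    ∃ z : S, (∀ x ∈ I, z * x = 0) ∧ (∀ s : S, z * s = s * z) ∧ a * z = a

/-!
If `a * s * a = 0` for every endomorphism `s`, then the image of `a` lies in the largest fully
invariant submodule `N` of `ker a`. As `a` kills `N`, there is a central `ψ` killing `N` with
`a = a * ψ = ψ * a`, and `ψ * a = 0` because `ψ` kills the image of `a`.
-/

section FullyInvariantCore

variable {R M : Type*}

section Semiring

variable [Semiring R] [AddCommMonoid M] [Module R M]

/-- The largest fully invariant submodule contained in `N`, encoded as the intersection of the
preimages of `N` under all endomorphisms. The core of `ker a` is the fully invariant submodule to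
which the centrally endo-AIP condition is applied. -/
def fullyInvariantCore (N : Submodule R M) : Submodule R M :=
  ⨅ s : Module.End R M, N.comap s

theorem mem_fullyInvariantCore {N : Submodule R M} {m : M} :
    m ∈ fullyInvariantCore N ↔ ∀ s : Module.End R M, s m ∈ N := by
  simp only [fullyInvariantCore, Submodule.mem_iInf, Submodule.mem_comap]

theorem fullyInvariantCore_le (N : Submodule R M) : fullyInvariantCore N ≤ N :=
  fun _ hm => mem_fullyInvariantCore.mp hm 1

theorem range_le_fullyInvariantCore_ker_iff {P Q : Type*} [AddCommMonoid P] [Module R P]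
    [AddCommMonoid Q] [Module R Q] {a : M →ₗ[R] P} {b : Q →ₗ[R] M} :
    LinearMap.range b ≤ fullyInvariantCore (LinearMap.ker a) ↔
      ∀ s : Module.End R M, (a ∘ₗ s) ∘ₗ b = 0 := by
  simp only [fullyInvariantCore, le_iInf_iff, ← LinearMap.ker_comp, LinearMap.range_le_ker_iff]

end Semiring

theorem isFullyInvariant_fullyInvariantCore [Ring R] [AddCommGroup M] [Module R M]
    (N : Submodule R M) : IsFullyInvariant (fullyInvariantCore N) :=
  fun φ _ hm => mem_fullyInvariantCore.mpr fun s => mem_fullyInvariantCore.mp hm (s * φ)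

end FullyInvariantCore

theorem IsCentrallyEndoAIP.eq_zero_of_range_le_of_le_ker {R M : Type*} [Ring R] [AddCommGroup M]
    [Module R M] (h : IsCentrallyEndoAIP R M) {N : Submodule R M} (hN : IsFullyInvariant N)
    {a : Module.End R M} (range_le : LinearMap.range a ≤ N) (le_ker : N ≤ LinearMap.ker a) :
    a = 0 := by
  obtain ⟨ψ, ψ_zero, ψ_central, a_mul_ψ⟩ := h N hN a fun _ hn => le_ker hn
  calc
    a = a * ψ := a_mul_ψ.symm
    _ = ψ * a := (ψ_central a).symm
    _ = 0 := LinearMap.ext fun m => ψ_zero (a m) (range_le ⟨m, rfl⟩)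

/-- The endomorphism ring of a centrally endo-AIP module is semiprime. -/
theorem stmt_15 (R M : Type*) [Ring R] [AddCommGroup M] [Module R M]
    (h : IsCentrallyEndoAIP R M) :
    ∀ a : Module.End R M, (∀ s : Module.End R M, a * s * a = 0) → a = 0 := by
  intro a ha
  exact h.eq_zero_of_range_le_of_le_ker (isFullyInvariant_fullyInvariantCore (LinearMap.ker a))
    (range_le_fullyInvariantCore_ker_iff.mpr ha) (fullyInvariantCore_le (LinearMap.ker a))
end

section
/- Let M be a semiprime right R-module whose endomorphism ring S = End_R(M) satisfies the ascending chain condition on principal left ideals. Then the following are equivalent: (i) M is a quasi-Baer module; (ii) M is an endo-AIP module; (iii) M is a centrally endo-AIP module. -/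
/-- A fully invariant submodule `N` of `M` is *prime in `M`*: for every two-sided ideal
`T` of `S = End_R(M)` and every fully invariant submodule `N'` of `M`, if `T(N') ⊆ N`
then `T(M) ⊆ N` or `N' ⊆ N`. -/
def IsPrimeInModule {R M : Type*} [Ring R] [AddCommGroup M] [Module R M]
    (N : Submodule R M) : Prop :=
  IsFullyInvariant N ∧
  ∀ T : TwoSidedIdeal (Module.End R M), ∀ N' : Submodule R M, IsFullyInvariant N' →
    (∀ f ∈ T, ∀ n ∈ N', f n ∈ N) → (∀ f ∈ T, ∀ m : M, f m ∈ N) ∨ N' ≤ N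

/-- `M` is a *semiprime module*: the zero submodule is an intersection of prime
submodules of `M`. -/
def IsSemiprimeModule (R M : Type*) [Ring R] [AddCommGroup M] [Module R M] : Prop :=
  ∃ Ps : Set (Submodule R M), (∀ P ∈ Ps, IsPrimeInModule P) ∧ sInf Ps = ⊥

/-- `M` is a *quasi-Baer module*: the left annihilator of every fully invariant submodule
`N` of `M` in `S = End_R(M)` equals `Se` for some idempotent `e ∈ S`. -/
def IsQuasiBaerModule (R M : Type*) [Ring R] [AddCommGroup M] [Module R M] : Prop :=
  ∀ N : Submodule R M, IsFullyInvariant N →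
    ∃ e : Module.End R M, e * e = e ∧
      ∀ φ : Module.End R M, (∀ n ∈ N, φ n = 0) ↔ ∃ s : Module.End R M, φ = s * e

/-!
The left annihilator `I` of a fully invariant submodule is a two-sided ideal of `S = End_R(M)`, and
the three conditions say that every such `I` is generated by an idempotent, is right s-unital, or
is centrally s-unital. So it is enough to compare these properties for one ideal `I` of a ring `S`.

If `I` is right s-unital, then any two elements of `I` have a common right unit in `I`, so the
principal left ideals contained in `I` are directed; by the chain condition one of them is the
largest, hence equals `I`, and a right unit of its generator is an idempotent generating `I`.
If `S` is semiprime and `I = Se` is two-sided with `e` idempotent, then `eS(1 - e) = 0`, so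
`(1 - e)Se` squares to zero and therefore vanishes; thus `e` is central.
-/

section Ring

variable {S : Type*}

/-- Right s-unital left ideals: every element of `I` has a right unit lying in `I`. -/
def IsRightSUnital [Semiring S] (I : Ideal S) : Prop :=
  ∀ a ∈ I, ∃ x ∈ I, a * x = a

/-- Centrally s-unital left ideals: every element of `I` has a unit lying in `I` which is central
in the whole ring `S`. -/
def IsCentrallySUnital [Semiring S] (I : Ideal S) : Prop :=
  ∀ a ∈ I, ∃ z ∈ I, (∀ s, Commute z s) ∧ a * z = a

/-- Semiprime rings, through the elementwise criterion `a S a = 0 → a = 0`. -/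
def IsSemiprimeRing (S : Type*) [Semiring S] : Prop :=
  ∀ a : S, (∀ s, a * s * a = 0) → a = 0

theorem IsCentrallySUnital.isRightSUnital [Semiring S] {I : Ideal S} (hI : IsCentrallySUnital I) :
    IsRightSUnital I := fun a ha ↦
  let ⟨z, hz, _, haz⟩ := hI a ha
  ⟨z, hz, haz⟩

theorem mul_eq_of_mem_span_of_isIdempotentElem [Semiring S] {e a : S}
    (he : IsIdempotentElem e) (ha : a ∈ Ideal.span {e}) : a * e = a := by
  obtain ⟨s, rfl⟩ := Ideal.mem_span_singleton'.1 ha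
  rw [mul_assoc, he.eq]

theorem isRightSUnital_span_singleton [Semiring S] {e : S} (he : IsIdempotentElem e) :
    IsRightSUnital (Ideal.span {e}) := fun _ ha ↦
  ⟨e, Ideal.mem_span_singleton_self e, mul_eq_of_mem_span_of_isIdempotentElem he ha⟩

theorem IsRightSUnital.exists_isIdempotentElem_span_eq [Semiring S] {I : Ideal S}
    (hI : IsRightSUnital I) (hprincipal : I.IsPrincipal) :
    ∃ e, IsIdempotentElem e ∧ I = Ideal.span {e} := by
  obtain ⟨a, rfl⟩ := hprincipal
  obtain ⟨e, he, hae⟩ := hI a (Ideal.mem_span_singleton_self a)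
  obtain ⟨s, rfl⟩ := Ideal.mem_span_singleton'.1 he
  refine ⟨s * a, by rw [IsIdempotentElem, mul_assoc, hae], le_antisymm ?_ ?_⟩
  · exact (Ideal.span_singleton_le_iff_mem _).2 (Ideal.mem_span_singleton'.2 ⟨a, hae⟩)
  · exact (Ideal.span_singleton_le_iff_mem _).2 he

theorem IsRightSUnital.exists_common_right_unit [Ring S] {I : Ideal S} (hI : IsRightSUnital I)
    {a b : S} (ha : a ∈ I) (hb : b ∈ I) : ∃ z ∈ I, a * z = a ∧ b * z = b := by
  obtain ⟨x, hx, hax⟩ := hI a ha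
  obtain ⟨y, hy, hby⟩ := hI (b - b * x) (I.sub_mem hb (I.mul_mem_left b hx))
  -- `1 - z = (1 - x) * (1 - y)`, whose factors annihilate `a` and `b - b * x` from the right.
  refine ⟨x + y - x * y, I.sub_mem (I.add_mem hx hy) (I.mul_mem_left x hy), ?_, ?_⟩
  · rw [mul_sub, mul_add, ← mul_assoc, hax, add_sub_cancel_right]
  · calc
      b * (x + y - x * y) = b * x + (b - b * x) * y := by noncomm_ring
      _ = b := by rw [hby, add_sub_cancel]

theorem IsRightSUnital.isPrincipal [Ring S] {I : Ideal S} (hI : IsRightSUnital I)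
    (hacc : {J : Ideal S | J.IsPrincipal}.WellFoundedOn (· > ·)) : I.IsPrincipal := by
  obtain ⟨J, ⟨hJ, hJI⟩, hmax⟩ :=
    (hacc.subset (Set.inter_subset_left (t := Set.Iic I))).exists_maximal
      ⟨⊥, bot_isPrincipal, Set.mem_Iic.2 bot_le⟩
  obtain ⟨a, rfl⟩ := hJ
  refine ⟨a, le_antisymm (fun b hb ↦ ?_) hJI⟩
  obtain ⟨z, hz, haz, hbz⟩ :=
    hI.exists_common_right_unit (hJI (Ideal.mem_span_singleton_self a)) hb
  have span_a_le : Ideal.span {a} ≤ Ideal.span {z} :=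
    (Ideal.span_singleton_le_iff_mem _).2 (Ideal.mem_span_singleton'.2 ⟨a, haz⟩)
  have span_z_le : Ideal.span {z} ≤ Ideal.span {a} :=
    hmax ⟨⟨z, rfl⟩, (Ideal.span_singleton_le_iff_mem I).2 hz⟩ span_a_le
  exact span_z_le (Ideal.mem_span_singleton'.2 ⟨b, hbz⟩)

theorem isRightSUnital_iff_exists_isIdempotentElem [Ring S] {I : Ideal S}
    (hacc : {J : Ideal S | J.IsPrincipal}.WellFoundedOn (· > ·)) :
    IsRightSUnital I ↔ ∃ e, IsIdempotentElem e ∧ I = Ideal.span {e} := by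
  refine ⟨fun hI ↦ hI.exists_isIdempotentElem_span_eq (hI.isPrincipal hacc), ?_⟩
  rintro ⟨e, he, rfl⟩
  exact isRightSUnital_span_singleton he

theorem IsSemiprimeRing.commute_of_isTwoSided_span [Ring S] (hS : IsSemiprimeRing S) {e : S}
    (he : IsIdempotentElem e) [(Ideal.span {e}).IsTwoSided] (s : S) : Commute e s := by
  have mul_mul_self (t : S) : e * t * e = e * t :=
    mul_eq_of_mem_span_of_isIdempotentElem he
      (Ideal.mul_mem_right t _ (Ideal.mem_span_singleton_self e))
  have corner_eq_zero : (1 - e) * s * e = 0 := by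
    refine hS _ fun t ↦ ?_
    calc
      (1 - e) * s * e * t * ((1 - e) * s * e)
          = (1 - e) * s * (e * t - e * t * e) * s * e := by noncomm_ring
      _ = 0 := by rw [mul_mul_self, sub_self]; simp only [mul_zero, zero_mul]
  have : s * e = e * s * e := by
    rwa [sub_mul, sub_mul, one_mul, sub_eq_zero] at corner_eq_zero
  exact (this.trans (mul_mul_self s)).symm

theorem IsSemiprimeRing.isCentrallySUnital_span_singleton [Ring S] (hS : IsSemiprimeRing S) {e : S}
    (he : IsIdempotentElem e) [(Ideal.span {e}).IsTwoSided] :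
    IsCentrallySUnital (Ideal.span {e}) := fun _ ha ↦
  ⟨e, Ideal.mem_span_singleton_self e, hS.commute_of_isTwoSided_span he,
    mul_eq_of_mem_span_of_isIdempotentElem he ha⟩

theorem IsSemiprimeRing.isRightSUnital_iff_isCentrallySUnital [Ring S] (hS : IsSemiprimeRing S)
    (hacc : {J : Ideal S | J.IsPrincipal}.WellFoundedOn (· > ·)) {I : Ideal S}
    [I.IsTwoSided] : IsRightSUnital I ↔ IsCentrallySUnital I := by
  refine ⟨fun hI ↦ ?_, IsCentrallySUnital.isRightSUnital⟩
  obtain ⟨e, he, rfl⟩ := (isRightSUnital_iff_exists_isIdempotentElem hacc).1 hI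
  exact hS.isCentrallySUnital_span_singleton he

theorem wellFoundedOn_isPrincipal_of_monotone_chain_condition [Semiring S]
    (hacc : ∀ f : ℕ → S,
      (∀ n : ℕ, (Ideal.span {f n} : Ideal S) ≤ Ideal.span {f (n + 1)}) →
      ∃ n : ℕ, ∀ m : ℕ, n ≤ m → (Ideal.span {f m} : Ideal S) = Ideal.span {f n}) :
    {J : Ideal S | J.IsPrincipal}.WellFoundedOn (· > ·) := by
  refine Set.wellFoundedOn_iff_no_descending_seq.2 fun J hJ ↦ ?_
  choose f hf using fun n ↦ (hJ n).principal
  have J_lt (n : ℕ) : J n < J (n + 1) := J.map_rel_iff.2 n.lt_succ_self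
  obtain ⟨n, hn⟩ := hacc f fun n ↦ (hf n).symm.trans_le ((J_lt n).le.trans_eq (hf (n + 1)))
  exact (J_lt n).ne' ((hf (n + 1)).trans ((hn (n + 1) n.le_succ).trans (hf n).symm))

end Ring

section Module

variable {R M : Type*} [Ring R] [AddCommGroup M] [Module R M]

namespace IsFullyInvariant

variable {N : Submodule R M}

/-- A fully invariant submodule of `M`, viewed as a submodule of `M` over its endomorphism ring. -/
def toEndSubmodule (hN : IsFullyInvariant N) : Submodule (Module.End R M) M where
  __ := N.toAddSubmonoid
  smul_mem' φ n hn := hN φ n hn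

/-- The left annihilator `l_S(N)` of a fully invariant submodule `N` in `S = End_R(M)`, a two-sided
ideal of `S`. -/
abbrev leftAnnihilator (hN : IsFullyInvariant N) : Ideal (Module.End R M) :=
  hN.toEndSubmodule.annihilator

theorem mem_leftAnnihilator (hN : IsFullyInvariant N) {φ : Module.End R M} :
    φ ∈ hN.leftAnnihilator ↔ ∀ n ∈ N, φ n = 0 :=
  Submodule.mem_annihilator

end IsFullyInvariant

theorem isEndoAIP_iff_isRightSUnital_leftAnnihilator :
    IsEndoAIP R M ↔
      ∀ (N : Submodule R M) (hN : IsFullyInvariant N), IsRightSUnital hN.leftAnnihilator := by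
  simp only [IsEndoAIP, IsRightSUnital, IsFullyInvariant.mem_leftAnnihilator]

theorem isCentrallyEndoAIP_iff_isCentrallySUnital_leftAnnihilator :
    IsCentrallyEndoAIP R M ↔
      ∀ (N : Submodule R M) (hN : IsFullyInvariant N), IsCentrallySUnital hN.leftAnnihilator := by
  simp only [IsCentrallyEndoAIP, IsCentrallySUnital, IsFullyInvariant.mem_leftAnnihilator,
    commute_iff_eq]

theorem isQuasiBaerModule_iff_leftAnnihilator_eq_span :
    IsQuasiBaerModule R M ↔
      ∀ (N : Submodule R M) (hN : IsFullyInvariant N),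
        ∃ e, IsIdempotentElem e ∧ hN.leftAnnihilator = Ideal.span {e} := by
  simp only [IsQuasiBaerModule, IsIdempotentElem, SetLike.ext_iff,
    IsFullyInvariant.mem_leftAnnihilator, Ideal.mem_span_singleton', eq_comm]

theorem IsFullyInvariant.iInf_comap_mul {P : Submodule R M} (a : Module.End R M) :
    IsFullyInvariant (⨅ s : Module.End R M, P.comap (a * s)) := fun φ n hn ↦ by
  simp only [Submodule.mem_iInf, Submodule.mem_comap] at hn ⊢
  exact fun s ↦ hn (s * φ)

theorem IsPrimeInModule.forall_mem_or_forall_mem {P : Submodule R M} (hP : IsPrimeInModule P)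
    {a b : Module.End R M} (hab : ∀ (s : Module.End R M) (m : M), a (s (b m)) ∈ P) :
    (∀ m, a m ∈ P) ∨ ∀ m, b m ∈ P := by
  -- The largest fully invariant submodule that `a` maps into `P`; it contains the image of `b`.
  let N : Submodule R M := ⨅ s : Module.End R M, P.comap (a * s)
  have hN : IsFullyInvariant N := .iInf_comap_mul a
  have mem_N {m : M} : m ∈ N ↔ ∀ s : Module.End R M, a (s m) ∈ P := Submodule.mem_iInf _
  let T : TwoSidedIdeal (Module.End R M) :=
    (hP.1.toEndSubmodule.colon (hN.toEndSubmodule : Set M)).toTwoSided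
  have mem_T {f : Module.End R M} : f ∈ T ↔ ∀ n ∈ N, f n ∈ P :=
    Ideal.mem_toTwoSided.trans Submodule.mem_colon
  refine (hP.2 T N hN fun f hf ↦ mem_T.1 hf).imp (fun hT ↦ ?_) fun hNP m ↦ ?_
  · exact hT a (mem_T.2 fun n hn ↦ mem_N.1 hn 1)
  · exact hNP (mem_N.2 fun s ↦ hab s m)

theorem IsSemiprimeModule.isSemiprimeRing_end (hM : IsSemiprimeModule R M) :
    IsSemiprimeRing (Module.End R M) := by
  intro a ha
  obtain ⟨Ps, hPs, sInf_eq_bot⟩ := hM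
  ext m
  rw [LinearMap.zero_apply, ← Submodule.mem_bot R, ← sInf_eq_bot, Submodule.mem_sInf]
  intro P hP
  have ha_apply (s : Module.End R M) (n : M) : a (s (a n)) ∈ P := by
    rw [show a (s (a n)) = 0 from LinearMap.congr_fun (ha s) n]
    exact P.zero_mem
  exact (or_self_iff.1 ((hPs P hP).forall_mem_or_forall_mem ha_apply)) m

end Module

theorem stmt_19_general (R M : Type*) [Ring R] [AddCommGroup M] [Module R M]
    (hS : IsSemiprimeRing (Module.End R M))
    (hacc : {J : Ideal (Module.End R M) | J.IsPrincipal}.WellFoundedOn (· > ·)) :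
    (IsQuasiBaerModule R M ↔ IsEndoAIP R M) ∧
    (IsEndoAIP R M ↔ IsCentrallyEndoAIP R M) := by
  rw [isQuasiBaerModule_iff_leftAnnihilator_eq_span, isEndoAIP_iff_isRightSUnital_leftAnnihilator,
    isCentrallyEndoAIP_iff_isCentrallySUnital_leftAnnihilator]
  exact ⟨forall₂_congr fun _ _ ↦ (isRightSUnital_iff_exists_isIdempotentElem hacc).symm,
    forall₂_congr fun _ _ ↦ hS.isRightSUnital_iff_isCentrallySUnital hacc⟩

/-- For a semiprime module `M` whose endomorphism ring satisfies the
ascending chain condition on principal left ideals, the conditions quasi-Baer,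
endo-AIP and centrally endo-AIP are equivalent. -/
theorem stmt_19 (R M : Type*) [Ring R] [AddCommGroup M] [Module R M]
    (hsemiprime : IsSemiprimeModule R M)
    (hacc : ∀ f : ℕ → Module.End R M,
      (∀ n : ℕ, (Ideal.span {f n} : Ideal (Module.End R M)) ≤ Ideal.span {f (n + 1)}) →
      ∃ n : ℕ, ∀ m : ℕ, n ≤ m →
        (Ideal.span {f m} : Ideal (Module.End R M)) = Ideal.span {f n}) :
    (IsQuasiBaerModule R M ↔ IsEndoAIP R M) ∧
    (IsEndoAIP R M ↔ IsCentrallyEndoAIP R M) :=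
  stmt_19_general R M hsemiprime.isSemiprimeRing_end
    (wellFoundedOn_isPrincipal_of_monotone_chain_condition hacc)
end
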